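/- Let c ≥ 3 and b ≥ 1 be integers. Then λ(𝒯_{c,b}) = c + 1 if b = 1, and λ(𝒯_{c,b}) = c if b ≥ 2. -/

import Mathlib

open Finset Matrix

/-- The sign `[T : e]` of an edge `e` in a triangle `T`. -/
noncomputable def triSign (T e : Finset ℕ) : ℝ :=
  if e ⊆ T ∧ e.card = 2 ∧ T.card = 3 then
    if (T \ e).max = T.max ∨ (T \ e).min = T.min then 1 else -1
  else 0

/-- A triangle family: a nonempty finite set of 3-element subsets of ℕ. -/
def IsTriFam (F : Finset (Finset ℕ)) : Prop :=
  F.Nonempty ∧ ∀ T ∈ F, T.card = 3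

/-- The edges of the support graph of a triangle family. -/
def edgesOf (F : Finset (Finset ℕ)) : Finset (Finset ℕ) :=
  F.biUnion fun T => T.powersetCard 2

/-- The vertices of the support graph of a triangle family. -/
def vertsOf (F : Finset (Finset ℕ)) : Finset ℕ :=
  F.biUnion id

/-- The signed edge-triangle incidence matrix of a triangle family. -/
noncomputable def delta1 (F : Finset (Finset ℕ)) :
    Matrix {T // T ∈ F} {e // e ∈ edgesOf F} ℝ :=
  Matrix.of fun T e => triSign T.1 e.1

/-- The smallest positive eigenvalue of a matrix. -/
noncomputable def lambdaMinPos {m : Type*} [Fintype m] (M : Matrix m m ℝ) : ℝ :=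
  sInf {μ : ℝ | 0 < μ ∧ ∃ v : m → ℝ, v ≠ 0 ∧ M.mulVec v = μ • v}

/-- `λ(𝒯)`: the smallest positive eigenvalue of `δ₁(𝒯)ᵀ δ₁(𝒯)`. -/
noncomputable def lam (F : Finset (Finset ℕ)) : ℝ :=
  lambdaMinPos ((delta1 F)ᵀ * delta1 F)

/-- The neighborhood of `x` in the support graph `Γ₀(F)`. -/
def nbrs (F : Finset (Finset ℕ)) (x : ℕ) : Finset ℕ :=
  (vertsOf F).filter fun y => x ≠ y ∧ ∃ T ∈ F, x ∈ T ∧ y ∈ T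

/-- `φ(t)`: the maximum of `λ(𝒯)` over triangle families with `|𝒯| = t`. -/
noncomputable def phi (t : ℕ) : ℝ :=
  sSup {r : ℝ | ∃ F : Finset (Finset ℕ), IsTriFam F ∧ F.card = t ∧ lam F = r}

/-- `Λ(t) = max_{1 ≤ s ≤ t} φ(s)`. -/
noncomputable def Lam (t : ℕ) : ℝ :=
  sSup {r : ℝ | ∃ s : ℕ, 1 ≤ s ∧ s ≤ t ∧ phi s = r}

/-- `H(n) = min{ s ≥ 1 : φ(C(n,3)+s) > n - 1 }`. -/
noncomputable def Hfun (n : ℕ) : ℕ :=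
  sInf {s : ℕ | 1 ≤ s ∧ (n : ℝ) - 1 < phi (n.choose 3 + s)}

/-- The triangle family `𝒯_{c,b}`: all 3-cliques of `K_c ∨ (b isolated vertices)`. -/
def Tcb (c b : ℕ) : Finset (Finset ℕ) :=
  ((Finset.Icc 1 c).powersetCard 3) ∪
    (Finset.Icc (c+1) (c+b)).biUnion
      (fun i => ((Finset.Icc 1 c).powersetCard 2).image (fun p => insert i p))


/-- sign of an ordered pair -/
noncomputable def sg (x y : ℕ) : ℝ := if x < y then 1 else if y < x then -1 else 0

lemma sg_self (x : ℕ) : sg x x = 0 := by simp [sg]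

lemma sg_swap (x y : ℕ) : sg y x = - sg x y := by
  unfold sg
  rcases lt_trichotomy x y with h | h | h
  · simp [h, not_lt.mpr h.le]
  · simp [h]
  · simp [h, not_lt.mpr h.le]

lemma sg_sq {x y : ℕ} (h : x ≠ y) : sg x y * sg x y = 1 := by
  unfold sg
  rcases lt_or_gt_of_ne h with h | h
  · simp [h]
  · simp [h, not_lt.mpr h.le]

lemma triSign_eq {x y z : ℕ} (hxy : x ≠ y) (hxz : x ≠ z) (hyz : y ≠ z) :
    triSign {x, y, z} {x, y} = sg x z * sg y z := by
  have h1 : ({x, y} : Finset ℕ) ⊆ {x, y, z} := by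
    intro a; simp; tauto
  have h2 : ({x, y} : Finset ℕ).card = 2 := Finset.card_pair hxy
  have h3 : ({x, y, z} : Finset ℕ).card = 3 := Finset.card_eq_three.mpr ⟨x, y, z, hxy, hxz, hyz, rfl⟩
  have h4 : ({x, y, z} : Finset ℕ) \ {x, y} = {z} := by
    ext a; simp; grind
  have h5 : ({x, y, z} : Finset ℕ).max = WithBot.some (max x (max y z)) := by
    rw [Finset.max_insert, Finset.max_insert, Finset.max_singleton]; rfl
  have h6 : ({x, y, z} : Finset ℕ).min = WithTop.some (min x (min y z)) := by
    rw [Finset.min_insert, Finset.min_insert, Finset.min_singleton]; rfl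
  unfold triSign
  rw [if_pos ⟨h1, h2, h3⟩, h4, h5, h6, Finset.max_singleton, Finset.min_singleton]
  simp only [WithBot.coe_inj, WithTop.coe_inj]
  unfold sg
  split_ifs <;> first | omega | norm_num

/-- extension of an edge vector by zero -/
noncomputable def ext0 (F : Finset (Finset ℕ)) (v : {e // e ∈ edgesOf F} → ℝ) (e : Finset ℕ) : ℝ :=
  if h : e ∈ edgesOf F then v ⟨e, h⟩ else 0

/-- antisymmetric function of an edge vector -/
noncomputable def lift (F : Finset (Finset ℕ)) (v : {e // e ∈ edgesOf F} → ℝ) (x y : ℕ) : ℝ :=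
  sg x y * ext0 F v {x, y}

/-- the up-Laplacian on antisymmetric functions -/
noncomputable def upL (F : Finset (Finset ℕ)) (V : Finset ℕ) (f : ℕ → ℕ → ℝ) (x y : ℕ) : ℝ :=
  ∑ z ∈ V, if ({x, y, z} : Finset ℕ) ∈ F then f x y + f y z + f z x else 0

lemma distinct_of_card {x y z : ℕ} (h : ({x, y, z} : Finset ℕ).card = 3) :
    x ≠ y ∧ x ≠ z ∧ y ≠ z := by
  refine ⟨?_, ?_, ?_⟩ <;> rintro rfl
  · have := Finset.card_le_two (a := x) (b := z)
    simp at h; omega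
  · have := Finset.card_le_two (a := x) (b := y)
    rw [Finset.pair_comm y x, Finset.insert_idem] at h; omega
  · have := Finset.card_le_two (a := x) (b := y)
    simp at h; omega

lemma pairs_of_triple {x y z : ℕ} (hxy : x ≠ y) (hxz : x ≠ z) (hyz : y ≠ z) :
    ({x, y, z} : Finset ℕ).powersetCard 2 = {{x, y}, {x, z}, {y, z}} := by
  ext e
  simp only [mem_powersetCard, mem_insert, mem_singleton]
  constructor
  · rintro ⟨h1, h2⟩
    obtain ⟨a, b, hab, rfl⟩ := Finset.card_eq_two.mp h2
    have ha : a ∈ ({x, y, z} : Finset ℕ) := h1 (by simp)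
    have hb : b ∈ ({x, y, z} : Finset ℕ) := h1 (by simp)
    simp only [mem_insert, mem_singleton] at ha hb
    rcases ha with rfl | rfl | rfl <;> rcases hb with rfl | rfl | rfl <;>
      simp_all [Finset.pair_comm]
  · rintro (rfl | rfl | rfl)
    · exact ⟨by intro a; simp; tauto, Finset.card_pair hxy⟩
    · exact ⟨by intro a; simp; tauto, Finset.card_pair hxz⟩
    · exact ⟨by intro a; simp; tauto, Finset.card_pair hyz⟩

lemma sum_pairs {x y z : ℕ} (hxy : x ≠ y) (hxz : x ≠ z) (hyz : y ≠ z) (g : Finset ℕ → ℝ) :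
    ∑ e ∈ ({x, y, z} : Finset ℕ).powersetCard 2, triSign {x, y, z} e * g e =
      sg x z * sg y z * g {x, y} + sg x y * sg z y * g {x, z} + sg y x * sg z x * g {y, z} := by
  have n1 : ({x, y} : Finset ℕ) ≠ {x, z} := by
    intro h
    have : y ∈ ({x, z} : Finset ℕ) := h ▸ (by simp)
    simp at this; grind
  have n2 : ({x, y} : Finset ℕ) ≠ {y, z} := by
    intro h
    have : x ∈ ({y, z} : Finset ℕ) := h ▸ (by simp)
    simp at this; grind
  have n3 : ({x, z} : Finset ℕ) ≠ {y, z} := by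
    intro h
    have : x ∈ ({y, z} : Finset ℕ) := h ▸ (by simp)
    simp at this; grind
  have e1 : ({x, y, z} : Finset ℕ) = {x, z, y} := by ext a; simp; tauto
  have e2 : ({x, y, z} : Finset ℕ) = {y, z, x} := by ext a; simp; tauto
  have t1 := triSign_eq hxy hxz hyz
  have t2 := triSign_eq hxz hxy hyz.symm
  have t3 := triSign_eq hyz hxy.symm hxz.symm
  rw [← e1] at t2
  rw [← e2] at t3
  rw [pairs_of_triple hxy hxz hyz, Finset.sum_insert (by simp [n1, n2]),
    Finset.sum_insert (by simp [n3]), Finset.sum_singleton, t1, t2, t3]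
  ring

lemma triSign_zero {T e : Finset ℕ} (h : ¬ e ⊆ T) : triSign T e = 0 := by
  unfold triSign; rw [if_neg (by tauto)]

lemma mulVec_formula (F : Finset (Finset ℕ)) (v : {e // e ∈ edgesOf F} → ℝ)
    (e : {e // e ∈ edgesOf F}) :
    (((delta1 F)ᵀ * delta1 F).mulVec v) e =
      ∑ T ∈ F, triSign T e.1 * ∑ e' ∈ T.powersetCard 2, triSign T e' * ext0 F v e' := by
  rw [← Matrix.mulVec_mulVec]
  simp only [Matrix.mulVec, dotProduct, Matrix.transpose_apply, delta1, Matrix.of_apply]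
  rw [← Finset.sum_coe_sort F]
  refine Finset.sum_congr rfl fun T _ => ?_
  congr 1
  have h1 : ∑ e' ∈ (T.1).powersetCard 2, triSign T.1 e' * ext0 F v e' =
      ∑ e' ∈ edgesOf F, triSign T.1 e' * ext0 F v e' := by
    apply Finset.sum_subset
    · intro e' he'
      exact Finset.mem_biUnion.mpr ⟨T.1, T.2, he'⟩
    · intro e' he' hn
      have : e'.card = 2 := by
        obtain ⟨T', _, h⟩ := Finset.mem_biUnion.mp he'
        exact (mem_powersetCard.mp h).2
      rw [triSign_zero, zero_mul]
      intro hs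
      exact hn (mem_powersetCard.mpr ⟨hs, this⟩)
  rw [h1, ← Finset.sum_coe_sort (edgesOf F)]
  refine Finset.sum_congr rfl fun e' _ => ?_
  simp [ext0]

lemma lift_mulVec (F : Finset (Finset ℕ)) (V : Finset ℕ) (hF : ∀ T ∈ F, T.card = 3)
    (hV : ∀ T ∈ F, T ⊆ V) (v : {e // e ∈ edgesOf F} → ℝ) (x y : ℕ) :
    lift F (((delta1 F)ᵀ * delta1 F).mulVec v) x y = upL F V (lift F v) x y := by
  by_cases he : ({x, y} : Finset ℕ) ∈ edgesOf F
  swap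
  · unfold lift upL
    rw [ext0, dif_neg he, mul_zero]
    symm
    apply Finset.sum_eq_zero
    intro z _
    rw [if_neg]
    intro h
    apply he
    have hd := distinct_of_card (hF _ h)
    refine Finset.mem_biUnion.mpr ⟨_, h, mem_powersetCard.mpr ⟨?_, Finset.card_pair hd.1⟩⟩
    intro a; simp; tauto
  have hxy : x ≠ y := by
    obtain ⟨T', _, h⟩ := Finset.mem_biUnion.mp he
    have h2 := (mem_powersetCard.mp h).2
    rintro rfl
    simp at h2
  unfold upL
  rw [lift, ext0, dif_pos he, mulVec_formula]
  simp only
  rw [← Finset.sum_filter]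
  have hs : ∑ T ∈ F, triSign T {x, y} * ∑ e' ∈ T.powersetCard 2, triSign T e' * ext0 F v e' =
      ∑ T ∈ (V.filter fun z => ({x, y, z} : Finset ℕ) ∈ F).image (fun z => ({x, y, z} : Finset ℕ)),
        triSign T {x, y} * ∑ e' ∈ T.powersetCard 2, triSign T e' * ext0 F v e' := by
    symm
    apply Finset.sum_subset
    · intro T hT
      simp only [mem_image, mem_filter] at hT
      obtain ⟨z, ⟨_, h⟩, rfl⟩ := hT
      exact h
    · intro T hT hn
      rw [triSign_zero, zero_mul]
      intro hsub
      apply hn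
      have hc : (T \ {x, y}).card = 1 := by
        rw [Finset.card_sdiff_of_subset hsub, hF T hT, Finset.card_pair hxy]
      obtain ⟨z, hz⟩ := Finset.card_eq_one.mp hc
      have hT' : ({x, y, z} : Finset ℕ) = T := by
        have := Finset.sdiff_union_of_subset hsub
        rw [hz] at this
        rw [← this]
        ext a; simp; tauto
      simp only [mem_image, mem_filter]
      refine ⟨z, ⟨hV T hT ?_, by rw [hT']; exact hT⟩, hT'⟩
      rw [← hT']; simp
  rw [hs, Finset.sum_image, Finset.mul_sum]
  · refine Finset.sum_congr rfl fun z hz => ?_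
    obtain ⟨h1, h2, h3⟩ := distinct_of_card (hF _ (mem_filter.mp hz).2)
    rw [sum_pairs h1 h2 h3, triSign_eq h1 h2 h3]
    unfold lift
    rw [Finset.pair_comm z x, sg_swap x y, sg_swap x z, sg_swap y z]
    have q1 := sg_sq h1
    have q2 := sg_sq h2
    have q3 := sg_sq h3
    generalize sg x y = a at *
    generalize sg x z = b at *
    generalize sg y z = d at *
    linear_combination (a * d * d * ext0 F v {x, y}) * q2 + a * ext0 F v {x, y} * q3
      - (b * d * d * ext0 F v {x, z}) * q1 - b * ext0 F v {x, z} * q3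
      + (d * b * b * ext0 F v {y, z}) * q1 + d * ext0 F v {y, z} * q2
  · intro z hz w hw hzw
    obtain ⟨h1, h2, h3⟩ := distinct_of_card (hF _ (mem_filter.mp hz).2)
    have : z ∈ ({x, y, w} : Finset ℕ) := by
      have h0 : z ∈ ({x, y, z} : Finset ℕ) := by simp
      simp only at hzw
      rwa [hzw] at h0
    simp at this
    grind

lemma lift_anti (F : Finset (Finset ℕ)) (v : {e // e ∈ edgesOf F} → ℝ) (x y : ℕ) :
    lift F v y x = - lift F v x y := by
  unfold lift; rw [sg_swap x y, Finset.pair_comm y x]; ring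

lemma div_upL (F : Finset (Finset ℕ)) (V : Finset ℕ) (f : ℕ → ℕ → ℝ)
    (hf : ∀ x y, f y x = - f x y) (x : ℕ) : ∑ y ∈ V, upL F V f x y = 0 := by
  unfold upL
  have h : ∑ y ∈ V, ∑ z ∈ V, (if ({x, y, z} : Finset ℕ) ∈ F then f x y + f y z + f z x else 0) =
      - ∑ y ∈ V, ∑ z ∈ V, (if ({x, y, z} : Finset ℕ) ∈ F then f x y + f y z + f z x else 0) := by
    conv_lhs => rw [Finset.sum_comm]
    simp only [← Finset.sum_neg_distrib]
    refine Finset.sum_congr rfl fun y _ => Finset.sum_congr rfl fun z _ => ?_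
    rw [Finset.pair_comm z y]
    split_ifs
    · rw [hf x z, hf y z, hf x y]; ring
    · simp
  linarith

lemma lift_smul (F : Finset (Finset ℕ)) (v : {e // e ∈ edgesOf F} → ℝ) (μ : ℝ) (x y : ℕ) :
    lift F (μ • v) x y = μ * lift F v x y := by
  unfold lift ext0; split_ifs <;> simp; ring

lemma edge_pair {F : Finset (Finset ℕ)} (e : {e // e ∈ edgesOf F}) :
    ∃ x y, x ≠ y ∧ e.1 = {x, y} := by
  obtain ⟨T', _, h⟩ := Finset.mem_biUnion.mp e.2
  obtain ⟨a, b, hab, h⟩ := Finset.card_eq_two.mp (mem_powersetCard.mp h).2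
  exact ⟨a, b, hab, h⟩

lemma lift_inj (F : Finset (Finset ℕ)) (v w : {e // e ∈ edgesOf F} → ℝ)
    (h : ∀ x y, lift F v x y = lift F w x y) : v = w := by
  funext e
  obtain ⟨x, y, hxy, he⟩ := edge_pair e
  have h1 := h x y
  have hm : ({x, y} : Finset ℕ) ∈ edgesOf F := he ▸ e.2
  unfold lift ext0 at h1
  rw [dif_pos hm, dif_pos hm] at h1
  have h0 : sg x y ≠ 0 := by
    intro h0; have := sg_sq hxy; rw [h0] at this; norm_num at this
  have h2 := mul_left_cancel₀ h0 h1
  have : e = ⟨{x, y}, hm⟩ := Subtype.ext he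
  rw [this]; exact h2

/-- edge vector of an antisymmetric function -/
noncomputable def unlift (F : Finset (Finset ℕ)) (f : ℕ → ℕ → ℝ) : {e // e ∈ edgesOf F} → ℝ :=
  fun e => ∑ x ∈ e.1, ∑ y ∈ e.1, if x < y then f x y else 0

lemma lift_unlift (F : Finset (Finset ℕ)) (f : ℕ → ℕ → ℝ) (hf : ∀ x y, f y x = - f x y)
    (hs : ∀ x y, ({x, y} : Finset ℕ) ∉ edgesOf F → f x y = 0) (x y : ℕ) :
    lift F (unlift F f) x y = f x y := by
  unfold lift ext0
  by_cases he : ({x, y} : Finset ℕ) ∈ edgesOf F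
  · rw [dif_pos he]
    rcases lt_trichotomy x y with h | h | h
    · simp [unlift, Finset.sum_pair h.ne, sg, h, not_lt.mpr h.le]
    · subst h
      have := hf x x
      rw [sg_self]; linarith
    · simp [unlift, Finset.sum_pair h.ne', sg, h, not_lt.mpr h.le]
      rw [hf x y]; ring
  · rw [dif_neg he, mul_zero, hs x y he]

lemma mem_Tcb {c b : ℕ} {T : Finset ℕ} : T ∈ Tcb c b ↔
    (T ⊆ Icc 1 c ∧ T.card = 3) ∨
      ∃ i ∈ Icc (c+1) (c+b), ∃ p, (p ⊆ Icc 1 c ∧ p.card = 2) ∧ insert i p = T := by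
  simp [Tcb, mem_powersetCard, mem_biUnion]

lemma Tcb_card {c b : ℕ} : ∀ T ∈ Tcb c b, T.card = 3 := by
  intro T hT
  rcases mem_Tcb.mp hT with h | ⟨i, hi, p, ⟨hp, hp2⟩, rfl⟩
  · exact h.2
  · rw [Finset.card_insert_of_notMem, hp2]
    intro h
    have := hp h
    simp at this hi; omega

lemma Tcb_sub {c b : ℕ} : ∀ T ∈ Tcb c b, T ⊆ Icc 1 (c+b) := by
  intro T hT a ha
  rcases mem_Tcb.mp hT with h | ⟨i, hi, p, ⟨hp, hp2⟩, rfl⟩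
  · have := h.1 ha; simp at this ⊢; omega
  · rcases mem_insert.mp ha with rfl | h
    · simp at hi ⊢; omega
    · have := hp h; simp at this ⊢; omega

lemma Tcb_no {c b x y : ℕ} (T) (hT : T ∈ Tcb c b) (hx : x ∈ T) (hy : y ∈ T) (hxy : x ≠ y)
    (h1 : c < x) (h2 : c < y) : False := by
  rcases mem_Tcb.mp hT with h | ⟨i, hi, p, ⟨hp, hp2⟩, rfl⟩
  · have := h.1 hx; simp at this; omega
  · rcases mem_insert.mp hx with rfl | h
    · rcases mem_insert.mp hy with rfl | h
      · exact hxy rfl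
      · have := hp h; simp at this; omega
    · have := hp h; simp at this; omega

lemma Tcb_core {c b x y z : ℕ} (hx : x ∈ Icc 1 c) (hy : y ∈ Icc 1 c) (hz : z ∈ Icc 1 (c+b))
    (hxy : x ≠ y) (hxz : x ≠ z) (hyz : y ≠ z) : ({x, y, z} : Finset ℕ) ∈ Tcb c b := by
  rw [mem_Tcb]
  by_cases h : z ≤ c
  · left
    refine ⟨?_, Finset.card_eq_three.mpr ⟨x, y, z, hxy, hxz, hyz, rfl⟩⟩
    simp [Finset.insert_subset_iff] at *; omega
  · right
    refine ⟨z, ?_, {x, y}, ⟨?_, Finset.card_pair hxy⟩, ?_⟩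
    · simp at *; omega
    · simp [Finset.insert_subset_iff] at *; omega
    · ext a; simp; tauto

lemma upL_core {c b : ℕ} (f : ℕ → ℕ → ℝ) (hf : ∀ x y, f y x = - f x y)
    (hdiv : ∀ x, ∑ y ∈ Icc 1 (c+b), f x y = 0) {x y : ℕ} (hx : x ∈ Icc 1 c) (hy : y ∈ Icc 1 c)
    (hxy : x ≠ y) : upL (Tcb c b) (Icc 1 (c+b)) f x y = ((c : ℝ) + b) * f x y := by
  have h0 : ∀ x, f x x = 0 := fun x => by have := hf x x; linarith
  have : upL (Tcb c b) (Icc 1 (c+b)) f x y = ∑ z ∈ Icc 1 (c+b), (f x y + f y z + - f x z) := by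
    unfold upL
    refine Finset.sum_congr rfl fun z hz => ?_
    split_ifs with h
    · rw [hf x z]
    · by_cases h1 : x = z
      · subst h1; rw [h0, hf x y]; ring
      by_cases h2 : y = z
      · subst h2; rw [h0]; ring
      exact absurd (Tcb_core hx hy hz hxy h1 h2) h
  rw [this, Finset.sum_add_distrib, Finset.sum_add_distrib, Finset.sum_neg_distrib, hdiv, hdiv]
  simp

lemma sum_split {c b : ℕ} (g : ℕ → ℝ) : ∑ z ∈ Icc 1 (c+b), g z =
    ∑ z ∈ Icc 1 c, g z + ∑ z ∈ Icc (c+1) (c+b), g z := by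
  rw [← Finset.sum_union]
  · congr 1; ext a; simp; omega
  · rw [Finset.disjoint_left]; intro a; simp; omega

lemma upL_outer {c b : ℕ} (f : ℕ → ℕ → ℝ) (hf : ∀ x y, f y x = - f x y)
    (hs : ∀ x y, ({x, y} : Finset ℕ) ∉ edgesOf (Tcb c b) → f x y = 0)
    (hdiv : ∀ x, ∑ y ∈ Icc 1 (c+b), f x y = 0) {v x : ℕ} (hv : v ∈ Icc (c+1) (c+b))
    (hx : x ∈ Icc 1 c) :
    upL (Tcb c b) (Icc 1 (c+b)) f v x =
      (c : ℝ) * f v x + ∑ w ∈ Icc (c+1) (c+b), f w x := by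
  have h0 : ∀ x, f x x = 0 := fun x => by have := hf x x; linarith
  have hB : ∀ z ∈ Icc (c+1) (c+b), f v z = 0 := by
    intro z hz
    by_cases hvz : v = z
    · rw [← hvz, h0]
    apply hs
    intro h
    obtain ⟨T, hT, h⟩ := Finset.mem_biUnion.mp h
    have h := (mem_powersetCard.mp h).1
    simp at hv hz
    exact Tcb_no T hT (h (by simp)) (h (by simp)) hvz (by omega) (by omega)
  have d1 := hdiv v
  rw [sum_split, Finset.sum_eq_zero hB, add_zero] at d1
  have d2 := hdiv x
  rw [sum_split] at d2
  have d3 : ∑ w ∈ Icc (c+1) (c+b), f w x = - ∑ w ∈ Icc (c+1) (c+b), f x w := by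
    rw [← Finset.sum_neg_distrib]
    exact Finset.sum_congr rfl fun w _ => hf x w
  unfold upL
  have hvx : v ≠ x := by simp at hv hx; omega
  rw [sum_split, Finset.sum_eq_zero (s := Icc (c+1) (c+b)), add_zero]
  · have : ∀ z ∈ Icc 1 c, (if ({v, x, z} : Finset ℕ) ∈ Tcb c b then f v x + f x z + f z v else 0)
        = f v x + f x z + - f v z := by
      intro z hz
      split_ifs with h
      · rw [hf v z]
      · by_cases h2 : x = z
        · subst h2; rw [h0]; ring
        exfalso
        apply h
        have h1 : z ≠ v := by simp at hv hz; omega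
        have := Tcb_core (z := v) (b := b) hx hz (by simp at hv ⊢; omega) h2 hvx.symm h1
        convert this using 1
        ext a; simp; tauto
    rw [Finset.sum_congr rfl this, Finset.sum_add_distrib, Finset.sum_add_distrib,
      Finset.sum_neg_distrib, d1]
    simp
    linarith
  · intro z hz
    rw [if_neg]
    intro h
    obtain ⟨h1, h2, h3⟩ := distinct_of_card (Tcb_card _ h)
    simp at hv hz
    exact Tcb_no _ h (x := v) (y := z) (by simp) (by simp) h2 (by omega) (by omega)

lemma edge_Tcb {c b x y : ℕ} (hc : 3 ≤ c) (hx : x ∈ Icc 1 c) (hy : y ∈ Icc 1 (c+b))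
    (hxy : x ≠ y) : ({x, y} : Finset ℕ) ∈ edgesOf (Tcb c b) := by
  obtain ⟨z, hz, hzx, hzy⟩ : ∃ z ∈ Icc 1 c, z ≠ x ∧ z ≠ y := by
    by_contra! h
    have : Icc 1 c ⊆ {x, y} := by
      intro a ha
      have := h a ha
      simp; tauto
    have := Finset.card_le_card this
    have h2 := Finset.card_le_two (a := x) (b := y)
    simp at this; omega
  refine Finset.mem_biUnion.mpr ⟨{x, z, y}, Tcb_core hx hz hy hzx.symm hxy hzy, ?_⟩
  refine mem_powersetCard.mpr ⟨?_, Finset.card_pair hxy⟩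
  intro a; simp; tauto

/-- every edge is a core edge or an outer edge -/
lemma edge_cases {c b x y : ℕ} (h : ({x, y} : Finset ℕ) ∈ edgesOf (Tcb c b)) :
    x ≠ y ∧ ((x ∈ Icc 1 c ∧ y ∈ Icc 1 c) ∨ (x ∈ Icc (c+1) (c+b) ∧ y ∈ Icc 1 c) ∨
      (y ∈ Icc (c+1) (c+b) ∧ x ∈ Icc 1 c)) := by
  obtain ⟨T, hT, h⟩ := Finset.mem_biUnion.mp h
  obtain ⟨h1, h2⟩ := mem_powersetCard.mp h
  have hxy : x ≠ y := by rintro rfl; simp at h2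
  have hx := h1 (show x ∈ ({x, y} : Finset ℕ) by simp)
  have hy := h1 (show y ∈ ({x, y} : Finset ℕ) by simp)
  have a1 := Tcb_sub T hT hx
  have a2 := Tcb_sub T hT hy
  have := Tcb_no T hT hx hy hxy
  refine ⟨hxy, ?_⟩
  simp at *
  omega

lemma lift_supp (F : Finset (Finset ℕ)) (v : {e // e ∈ edgesOf F} → ℝ) (x y : ℕ)
    (h : ({x, y} : Finset ℕ) ∉ edgesOf F) : lift F v x y = 0 := by
  rw [lift, ext0, dif_neg h, mul_zero]

/-- Positive eigenvalues are `c` (only if `b ≥ 2`) or `c + b`. -/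
lemma eig_cases {c b : ℕ} {μ : ℝ} (hμ : 0 < μ)
    {v : {e // e ∈ edgesOf (Tcb c b)} → ℝ} (hv : v ≠ 0)
    (h : ((delta1 (Tcb c b))ᵀ * delta1 (Tcb c b)).mulVec v = μ • v) :
    μ = c + b ∨ (μ = c ∧ b ≠ 1) := by
  set f := lift (Tcb c b) v with hfdef
  have hf : ∀ x y, f y x = - f x y := lift_anti _ v
  have hs : ∀ x y, ({x, y} : Finset ℕ) ∉ edgesOf (Tcb c b) → f x y = 0 := lift_supp _ v
  have hA : ∀ x y, upL (Tcb c b) (Icc 1 (c+b)) f x y = μ * f x y := by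
    intro x y
    rw [hfdef, ← lift_mulVec _ _ Tcb_card Tcb_sub, h, lift_smul]
  have hdiv : ∀ x, ∑ y ∈ Icc 1 (c+b), f x y = 0 := by
    intro x
    have := div_upL (Tcb c b) (Icc 1 (c+b)) f hf x
    simp only [hA] at this
    rw [← Finset.mul_sum] at this
    exact (mul_eq_zero.mp this).resolve_left hμ.ne'
  by_contra hcon
  push Not at hcon
  obtain ⟨hn1, hn2⟩ := hcon
  have hout : ∀ w ∈ Icc (c+1) (c+b), ∀ x ∈ Icc 1 c,
      μ * f w x = c * f w x + ∑ w ∈ Icc (c+1) (c+b), f w x := fun w hw x hx => by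
    rw [← hA, upL_outer f hf hs hdiv hw hx]
  have hS : ∀ x ∈ Icc 1 c, ∑ w ∈ Icc (c+1) (c+b), f w x = 0 := by
    intro x hx
    have h1 := Finset.sum_congr rfl (fun w hw => hout w hw x hx)
    rw [← Finset.mul_sum, Finset.sum_add_distrib, ← Finset.mul_sum] at h1
    simp at h1
    have h2 : (μ - (c + b)) * ∑ w ∈ Icc (c+1) (c+b), f w x = 0 := by linarith
    exact (mul_eq_zero.mp h2).resolve_left (sub_ne_zero.mpr hn1)
  have hz1 : ∀ w ∈ Icc (c+1) (c+b), ∀ x ∈ Icc 1 c, f w x = 0 := by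
    intro w hw x hx
    by_cases hmc : μ = c
    · have hb := hn2 hmc
      subst hb
      have h1 := hS x hx
      simp at h1 hw
      have : w = c + 1 := by omega
      rw [this]; exact h1
    · have h1 := hout w hw x hx
      rw [hS x hx] at h1
      have h2 : (μ - c) * f w x = 0 := by linarith
      exact (mul_eq_zero.mp h2).resolve_left (sub_ne_zero.mpr hmc)
  apply hv
  apply lift_inj
  intro x y
  have e0 : lift (Tcb c b) 0 x y = 0 := by simp [lift, ext0]
  rw [e0]
  change f x y = 0
  by_cases he : ({x, y} : Finset ℕ) ∈ edgesOf (Tcb c b)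
  swap
  · exact hs x y he
  obtain ⟨hxy, ⟨hx, hy⟩ | ⟨hx, hy⟩ | ⟨hy, hx⟩⟩ := edge_cases he
  · have h1 := hA x y
    rw [upL_core f hf hdiv hx hy hxy] at h1
    have h2 : (μ - (c + b)) * f x y = 0 := by linarith
    exact (mul_eq_zero.mp h2).resolve_left (sub_ne_zero.mpr hn1)
  · exact hz1 x hx y hy
  · rw [hf y x, hz1 y hy x hx, neg_zero]

/-- Building eigenvectors from divergence-free functions. -/
lemma eig_exists {c b : ℕ} {μ : ℝ} (f : ℕ → ℕ → ℝ) (hf : ∀ x y, f y x = - f x y)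
    (hs : ∀ x y, ({x, y} : Finset ℕ) ∉ edgesOf (Tcb c b) → f x y = 0)
    (hdiv : ∀ x, ∑ y ∈ Icc 1 (c+b), f x y = 0)
    (hcore : ∀ x ∈ Icc 1 c, ∀ y ∈ Icc 1 c, ((c : ℝ) + b) * f x y = μ * f x y)
    (hout : ∀ v ∈ Icc (c+1) (c+b), ∀ x ∈ Icc 1 c,
      (c : ℝ) * f v x + ∑ w ∈ Icc (c+1) (c+b), f w x = μ * f v x)
    (hne : ∃ x y, f x y ≠ 0) :
    ∃ v : {e // e ∈ edgesOf (Tcb c b)} → ℝ, v ≠ 0 ∧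
      ((delta1 (Tcb c b))ᵀ * delta1 (Tcb c b)).mulVec v = μ • v := by
  have hl : lift (Tcb c b) (unlift (Tcb c b) f) = f := by
    funext x y; exact lift_unlift _ f hf hs x y
  refine ⟨unlift (Tcb c b) f, ?_, ?_⟩
  · intro h0
    obtain ⟨x, y, h⟩ := hne
    apply h
    rw [← hl, h0]; simp [lift, ext0]
  · apply lift_inj
    intro x y
    rw [lift_smul]
    by_cases he : ({x, y} : Finset ℕ) ∈ edgesOf (Tcb c b)
    swap
    · rw [lift_supp _ _ _ _ he, lift_supp _ _ _ _ he, mul_zero]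
    have key : ∀ v ∈ Icc (c+1) (c+b), ∀ x ∈ Icc 1 c,
        lift (Tcb c b) (((delta1 (Tcb c b))ᵀ * delta1 (Tcb c b)).mulVec (unlift (Tcb c b) f)) v x
          = μ * f v x := by
      intro v hv x hx
      rw [lift_mulVec _ _ Tcb_card Tcb_sub, hl, upL_outer f hf hs hdiv hv hx, hout v hv x hx]
    obtain ⟨hxy, ⟨hx, hy⟩ | ⟨hx, hy⟩ | ⟨hy, hx⟩⟩ := edge_cases he
    · rw [lift_mulVec _ _ Tcb_card Tcb_sub, hl, upL_core f hf hdiv hx hy hxy, hcore x hx y hy]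
    · rw [hl, key x hx y hy]
    · rw [lift_anti, hl, key y hy x hx, hf y x]; ring

/-- indicator of a vertex -/
noncomputable def ind (a x : ℕ) : ℝ := if x = a then 1 else 0

lemma sum_ind {n a : ℕ} (ha : a ∈ Icc 1 n) : ∑ y ∈ Icc 1 n, ind a y = 1 := by
  unfold ind; rw [Finset.sum_ite_eq' , if_pos ha]

lemma ind_ne {a x : ℕ} (h : x ≠ a) : ind a x = 0 := by simp [ind, h]

theorem stmt16 (c b : ℕ) (hc : 3 ≤ c) (hb : 1 ≤ b) :
    (b = 1 → lam (Tcb c b) = (c : ℝ) + 1) ∧ (2 ≤ b → lam (Tcb c b) = (c : ℝ)) := by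
  have hc0 : (0 : ℝ) < c := by exact_mod_cast (by omega : 0 < c)
  constructor
  · rintro rfl
    apply IsLeast.csInf_eq
    constructor
    · refine ⟨by positivity, ?_⟩
      have hsupp : ∀ x y, ¬ (x ∈ Icc 1 c ∧ y ∈ Icc 1 c) →
          ind 1 x * ind 2 y - ind 2 x * ind 1 y + (ind 2 x * ind 3 y - ind 3 x * ind 2 y)
          + (ind 3 x * ind 1 y - ind 1 x * ind 3 y) = 0 := by
        intro x y h
        by_cases hx : x ∈ Icc 1 c
        · have hy : y ∉ Icc 1 c := fun hy => h ⟨hx, hy⟩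
          simp at hy
          rw [ind_ne (a := 1) (x := y) (by omega), ind_ne (a := 2) (x := y) (by omega),
            ind_ne (a := 3) (x := y) (by omega)]; ring
        · simp at hx
          rw [ind_ne (a := 1) (x := x) (by omega), ind_ne (a := 2) (x := x) (by omega),
            ind_ne (a := 3) (x := x) (by omega)]; ring
      apply eig_exists (fun x y =>
        ind 1 x * ind 2 y - ind 2 x * ind 1 y + (ind 2 x * ind 3 y - ind 3 x * ind 2 y)
          + (ind 3 x * ind 1 y - ind 1 x * ind 3 y))
      · intro x y; ring
      · intro x y h
        by_cases hxy : x = y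
        · subst hxy; ring
        apply hsupp
        rintro ⟨hx, hy⟩
        exact h (edge_Tcb hc hx (by simp at hy ⊢; omega) hxy)
      · intro x
        simp only [Finset.sum_add_distrib, Finset.sum_sub_distrib, ← Finset.mul_sum]
        rw [sum_ind (a := 1) (by simp), sum_ind (a := 2) (by simp; omega), sum_ind (a := 3) (by simp; omega)]
        ring
      · intro x _ y _; simp
      · intro v hv x hx
        have : ∀ w ∈ Icc (c+1) (c+1), _ := fun w hw => hsupp w x (by simp at hw ⊢; omega)
        rw [Finset.sum_eq_zero this, this v hv]; simp
      · exact ⟨1, 2, by simp [ind]⟩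
    · rintro μ ⟨hμ, v, hv, h⟩
      rcases eig_cases hμ hv h with h | h
      · rw [h]; simp
      · exact absurd rfl h.2
  · intro hb2
    apply IsLeast.csInf_eq
    constructor
    · refine ⟨hc0, ?_⟩
      have i1 : ∀ a ∈ Icc 1 (c+b), ∑ y ∈ Icc 1 (c+b), ind a y = 1 := fun a => sum_ind
      have hcc : ∀ x ∈ Icc 1 c, ind (c+1) x - ind (c+2) x = 0 := by
        intro x hx
        simp at hx
        rw [ind_ne (a := c+1) (by omega), ind_ne (a := c+2) (by omega)]; ring
      apply eig_exists (fun x y =>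
        (ind (c+1) x - ind (c+2) x) * (ind 1 y - ind 2 y)
          - (ind (c+1) y - ind (c+2) y) * (ind 1 x - ind 2 x))
      · intro x y; ring
      · intro x y h
        have key : ∀ x y, ({x, y} : Finset ℕ) ∉ edgesOf (Tcb c b) →
            (ind (c+1) x - ind (c+2) x) * (ind 1 y - ind 2 y) = 0 := by
          intro x y h
          by_contra hne
          apply h
          have hx : x = c + 1 ∨ x = c + 2 := by
            by_contra hx
            push Not at hx
            apply hne
            rw [ind_ne hx.1, ind_ne hx.2]; ring
          have hy : y = 1 ∨ y = 2 := by
            by_contra hy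
            push Not at hy
            apply hne
            rw [ind_ne hy.1, ind_ne hy.2]; ring
          rw [Finset.pair_comm]
          exact edge_Tcb hc (by simp; omega) (by simp; omega) (by omega)
        rw [key x y h, key y x (by rwa [Finset.pair_comm])]; ring
      · intro x
        simp only [Finset.sum_sub_distrib, ← Finset.mul_sum, ← Finset.sum_mul]
        rw [i1 1 (by simp; omega), i1 2 (by simp; omega), i1 (c+1) (by simp; omega),
          i1 (c+2) (by simp; omega)]
        ring
      · intro x hx y hy
        rw [hcc x hx, hcc y hy]; ring
      · intro v hv x hx
        simp only [hcc x hx, zero_mul, sub_zero, ← Finset.sum_mul]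
        have : ∑ w ∈ Icc (c+1) (c+b), (ind (c+1) w - ind (c+2) w) = 0 := by
          have h := sum_split (c := c) (b := b) (fun w => ind (c+1) w - ind (c+2) w)
          rw [Finset.sum_eq_zero hcc, Finset.sum_sub_distrib, i1 (c+1) (by simp; omega),
            i1 (c+2) (by simp; omega)] at h
          linarith
        rw [this]; ring
      · refine ⟨c+1, 1, ?_⟩
        rw [ind_ne (a := c+2) (x := c+1) (by omega), ind_ne (a := 2) (x := 1) (by omega),
          ind_ne (a := c+1) (x := 1) (by omega), ind_ne (a := c+2) (x := 1) (by omega)]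
        simp [ind]
    · rintro μ ⟨hμ, v, hv, h⟩
      rcases eig_cases hμ hv h with h | h
      · rw [h]; simp
      · rw [h.1]
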